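/- Let k be an integer and let H be a finite simple graph with χ(H) ≥ (k−1)² + 1. If G is an (≤1)-subdivision of H, then there exists an induced subgraph G′ of G such that either χ(G′) ≥ k, or G′ is a 1-subdivision of a graph H′ with χ(H′) ≥ k. -/

import Mathlib

open SimpleGraph

universe u v

namespace CFPaper

variable {V : Type u} {W : Type v}

/-- A coloring is proper if adjacent vertices get distinct colors. -/
def Proper (G : SimpleGraph V) (φ : V → ℕ) : Prop :=
  ∀ ⦃u w : V⦄, G.Adj u w → φ u ≠ φ w

/-- A coloring is conflict-free if every non-isolated vertex has a color appearing
exactly once in its open neighborhood. -/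
def ConflictFree (G : SimpleGraph V) (φ : V → ℕ) : Prop :=
  ∀ v : V, (G.neighborSet v).Nonempty →
    ∃ c : ℕ, {u : V | G.Adj v u ∧ φ u = c}.ncard = 1

/-- `G` is conflict-free `k`-choosable (k a real number). -/
def CFChoosable (G : SimpleGraph V) (k : ℝ) : Prop :=
  ∀ L : V → Finset ℕ, (∀ v, k ≤ ((L v).card : ℝ)) →
    ∃ φ : V → ℕ, (∀ v, φ v ∈ L v) ∧ Proper G φ ∧ ConflictFree G φ

/-- A coloring is `S`-achieved if for every non-isolated vertex there are `s ∈ S`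
and a color appearing exactly `s` times in its open neighborhood. -/
def SAchieved (S : Set ℕ) (G : SimpleGraph V) (φ : V → ℕ) : Prop :=
  ∀ v : V, (G.neighborSet v).Nonempty →
    ∃ s ∈ S, ∃ c : ℕ, {u : V | G.Adj v u ∧ φ u = c}.ncard = s

/-- `G` is `S`-achieved `t`-choosable. -/
def SChoosable (S : Set ℕ) (G : SimpleGraph V) (t : ℕ) : Prop :=
  ∀ L : V → Finset ℕ, (∀ v, t ≤ (L v).card) →
    ∃ φ : V → ℕ, (∀ v, φ v ∈ L v) ∧ Proper G φ ∧ SAchieved S G φ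

/-- `G` is properly `S`-achieved `t`-colorable (colors from `{1,…,t}`). -/
def SColorable (S : Set ℕ) (G : SimpleGraph V) (t : ℕ) : Prop :=
  ∃ φ : V → ℕ, (∀ v, φ v ∈ Finset.Icc 1 t) ∧ Proper G φ ∧ SAchieved S G φ

/-- `G` has a proper conflict-free coloring with colors from `{1,…,t}`. -/
def PCFColorable (G : SimpleGraph V) (t : ℕ) : Prop :=
  ∃ φ : V → ℕ, (∀ v, φ v ∈ Finset.Icc 1 t) ∧ Proper G φ ∧ ConflictFree G φ

/-- The proper conflict-free chromatic number. -/
noncomputable def chiPCF (G : SimpleGraph V) : ℕ := sInf {t : ℕ | PCFColorable G t}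

/-- `(B x : x : ι)` is a tree-decomposition of `G` with underlying tree `T`. -/
structure IsTreeDecomp (G : SimpleGraph V) {ι : Type*} (T : SimpleGraph ι) (B : ι → Set V) :
    Prop where
  tree : T.IsTree
  bags_connected : ∀ vv : V, (T.induce {x : ι | vv ∈ B x}).Connected
  edge_in_bag : ∀ ⦃a b : V⦄, G.Adj a b → ∃ x : ι, a ∈ B x ∧ b ∈ B x

/-- The torso of a tree-decomposition at a node `x`. -/
def torso (G : SimpleGraph V) {ι : Type*} (T : SimpleGraph ι) (B : ι → Set V) (x : ι) :
    SimpleGraph (B x) :=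
  SimpleGraph.fromRel fun a b =>
    G.Adj a b ∨ ∃ y : ι, T.Adj x y ∧ (a : V) ∈ B y ∧ (b : V) ∈ B y

/-- The frame of a tree-decomposition at a node `x`. -/
def frame (G : SimpleGraph V) {ι : Type*} (T : SimpleGraph ι) (B : ι → Set V) (x : ι) :
    Set (Set (B x)) :=
  {s : Set (B x) | ∃ y : ι, T.Adj x y ∧ s = {a : B x | (a : V) ∈ B y}}

/-- A subgraph `H` of `G` is `C`-compatible: every edge of `H` has both ends in some member
of `C`. -/
def Compatible (C : Set (Set V)) (H : SimpleGraph V) : Prop :=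
  ∀ ⦃a b : V⦄, H.Adj a b → ∃ c ∈ C, a ∈ c ∧ b ∈ c

/-- `G` is `(S,C,L,t)`-extendable. -/
def Extendable (S : Set ℕ) (G : SimpleGraph V) (C : Set (Set V)) (L : V → Finset ℕ)
    (t : ℕ) : Prop :=
  ∀ (Wc : Set V), G.IsClique Wc → Wc.ncard ≤ t →
  ∀ (H : SimpleGraph V), H ≤ G → Compatible C H →
  ∀ (φW : V → ℕ), (∀ w ∈ Wc, φW w ∈ L w) →
    (∀ a ∈ Wc, ∀ b ∈ Wc, G.Adj a b → φW a ≠ φW b) →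
  ∀ (f : V → ℕ) (g : V → Bool),
  ∃ φ : V → ℕ, (∀ w, φ w ∈ L w) ∧ Proper G φ ∧ (∀ w ∈ Wc, φ w = φW w) ∧
    (∀ w ∈ Wc, g w = false → ∀ u : V, G.Adj w u → u ∉ Wc → φ u ≠ f w) ∧
    (∀ w : V, (w ∉ Wc ∨ (w ∈ Wc ∧ g w = true)) →
      (((G \ H).neighborSet w = ∅) ∨
        ∃ c : ℕ, {u : V | (G \ H).Adj w u ∧ φ u = c}.ncard ∈ S))

/-- `H` is a minor of `G` (branch-set definition). -/
def IsMinor (H : SimpleGraph W) (G : SimpleGraph V) : Prop :=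
  ∃ ρ : W → Set V,
    (∀ w : W, (G.induce (ρ w)).Connected) ∧
    (Pairwise fun a b => Disjoint (ρ a) (ρ b)) ∧
    ∀ ⦃a b : W⦄, H.Adj a b → ∃ x ∈ ρ a, ∃ y ∈ ρ b, G.Adj x y

/-- The spanning subgraph of `G` whose edges are those between `A` and its complement. -/
def crossGraph (G : SimpleGraph V) (A : Set V) : SimpleGraph V :=
  SimpleGraph.fromRel fun x y => G.Adj x y ∧ x ∈ A ∧ y ∉ A

/-- The odd contraction of `G` determined by the bipartition `{A, Aᶜ}`: contract each
connected component of the spanning bipartite subgraph between `A` and `Aᶜ`. -/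
def oddContract (G : SimpleGraph V) (A : Set V) :
    SimpleGraph ((crossGraph G A).ConnectedComponent) :=
  SimpleGraph.fromRel fun Ct Dt =>
    ∃ x y : V, (crossGraph G A).connectedComponentMk x = Ct ∧
      (crossGraph G A).connectedComponentMk y = Dt ∧ G.Adj x y

/-- `OddContractions G H`: `H` is obtained from `G` by repeatedly applying odd
contractions. -/
inductive OddContractions : ∀ {α : Type u}, SimpleGraph α → ∀ {β : Type u}, SimpleGraph β → Prop
  | refl {α : Type u} (G : SimpleGraph α) : OddContractions G G
  | step {α : Type u} (G : SimpleGraph α) (A : Set α) {β : Type u} {H : SimpleGraph β} :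
      OddContractions (oddContract G A) H → OddContractions G H

/-- `H` is an odd minor of `G`: `H` is isomorphic to a graph obtained from a subgraph of `G`
by repeatedly applying odd contractions. -/
def IsOddMinor (H : SimpleGraph W) (G : SimpleGraph V) : Prop :=
  ∃ (s : Set V) (G₀ : SimpleGraph s), G₀ ≤ G.induce s ∧
    ∃ (β : Type u) (K : SimpleGraph β), OddContractions G₀ K ∧ Nonempty (H ≃g K)

/-- The graph obtained from `H` by subdividing each edge `e` exactly `n e` times, where
`σ` chooses an orientation of each edge. -/
def subdivGraph (H : SimpleGraph W) (σ : H.edgeSet → W × W) (n : H.edgeSet → ℕ) :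
    SimpleGraph (W ⊕ (Σ e : H.edgeSet, Fin (n e))) :=
  SimpleGraph.fromRel fun a b =>
    (∃ (x y : W) (h : H.Adj x y),
        a = Sum.inl x ∧ b = Sum.inl y ∧ n ⟨s(x, y), H.mem_edgeSet.mpr h⟩ = 0) ∨
    (∃ (x : W) (p : Σ e : H.edgeSet, Fin (n e)), a = Sum.inl x ∧ b = Sum.inr p ∧
        ((x = (σ p.1).1 ∧ (p.2 : ℕ) = 0) ∨ (x = (σ p.1).2 ∧ (p.2 : ℕ) = n p.1 - 1))) ∨
    (∃ p q : Σ e : H.edgeSet, Fin (n e), a = Sum.inr p ∧ b = Sum.inr q ∧ p.1 = q.1 ∧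
        (p.2 : ℕ) + 1 = (q.2 : ℕ))

/-- `σ` is a valid orientation of the edges of `H`. -/
def ValidOrientation (H : SimpleGraph W) (σ : H.edgeSet → W × W) : Prop :=
  ∀ e : H.edgeSet, s((σ e).1, (σ e).2) = (e : Sym2 W)

/-- `G` contains a subdivision of `H` as a subgraph. -/
def ContainsSubdivision (H : SimpleGraph W) (G : SimpleGraph V) : Prop :=
  ∃ (σ : H.edgeSet → W × W) (n : H.edgeSet → ℕ), ValidOrientation H σ ∧
    ∃ f : subdivGraph H σ n →g G, Function.Injective f

/-- The strong product of two graphs. -/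
def strongProd {α : Type*} {β : Type*} (A : SimpleGraph α) (B : SimpleGraph β) :
    SimpleGraph (α × β) :=
  SimpleGraph.fromRel fun p q =>
    (A.Adj p.1 q.1 ∧ p.2 = q.2) ∨ (p.1 = q.1 ∧ B.Adj p.2 q.2) ∨
      (A.Adj p.1 q.1 ∧ B.Adj p.2 q.2)


/-- A layering of `G`. -/
def IsLayering (G : SimpleGraph V) (Vl : ℕ → Set V) : Prop :=
  (∀ vv : V, ∃ i : ℕ, vv ∈ Vl i) ∧ (Pairwise fun i j => Disjoint (Vl i) (Vl j)) ∧
  ∀ ⦃a b : V⦄, G.Adj a b → ∃ i : ℕ, a ∈ Vl i ∪ Vl (i + 1) ∧ b ∈ Vl i ∪ Vl (i + 1)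

/-!
If `G` is `a`-colorable, then the branch vertices of `G` split into `a` independent sets. They
cannot all induce `b`-colorable subgraphs of `H`, since pairing the two colorings would color `H`
with `a * b` colors. So some independent set `A` of branch vertices induces a subgraph of `H` that
is not `b`-colorable. Independence says that every edge of `H` inside `A` is subdivided in `G`, so
`G` contains the 1-subdivision of `H[A]` as an induced subgraph. The case in question is
`a = b = k - 1`.
-/

theorem colorable_of_induce_preimage_singleton {ι : Type*} [Fintype ι] {G : SimpleGraph V}
    {b : ℕ} (C : V → ι) (h : ∀ i, (G.induce (C ⁻¹' {i})).Colorable b) :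
    G.Colorable (Fintype.card ι * b) := by
  let D (i : ι) : (G.induce (C ⁻¹' {i})).Coloring (Fin b) := (h i).some
  have hD {y : V} : ∀ {i : ι} (hy : C y = i), D (C y) ⟨y, rfl⟩ = D i ⟨y, hy⟩ := by
    rintro _ rfl
    rfl
  let E : G.Coloring (ι × Fin b) :=
    .mk (fun x ↦ (C x, D (C x) ⟨x, rfl⟩)) fun {x y} hxy hE ↦ by
      obtain ⟨hC, hDxy⟩ := Prod.mk.inj hE
      rw [hD hC.symm] at hDxy
      exact (D (C x)).valid (v := ⟨x, rfl⟩) (w := ⟨y, hC.symm⟩) hxy hDxy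
  simpa only [Fintype.card_prod, Fintype.card_fin] using E.colorable

theorem exists_isIndepSet_not_colorable_induce {H K : SimpleGraph V} {a b : ℕ}
    (hH : ¬ H.Colorable (a * b)) (hK : K.Colorable a) :
    ∃ A : Set V, K.IsIndepSet A ∧ ¬ (H.induce A).Colorable b := by
  obtain ⟨C⟩ := hK
  obtain ⟨i, hi⟩ : ∃ i, ¬ (H.induce (C ⁻¹' {i})).Colorable b := by
    by_contra! h
    exact hH (by simpa only [Fintype.card_fin] using colorable_of_induce_preimage_singleton C h)
  exact ⟨C ⁻¹' {i}, fun x hx y hy _ hxy ↦ C.valid hxy (hx.trans hy.symm), hi⟩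

theorem exists_validOrientation (H : SimpleGraph W) : ∃ σ, ValidOrientation H σ :=
  ⟨fun e ↦ (e : Sym2 W).out, fun e ↦ (e : Sym2 W).out_eq⟩

section SubdivGraph

variable {H : SimpleGraph W} {σ : H.edgeSet → W × W} {n : H.edgeSet → ℕ}

theorem subdivGraph_adj_inl_inl {x y : W} :
    (subdivGraph H σ n).Adj (Sum.inl x) (Sum.inl y) ↔
      ∃ h : H.Adj x y, n ⟨s(x, y), H.mem_edgeSet.mpr h⟩ = 0 := by
  have hswap (h : H.Adj y x) : (⟨s(y, x), h⟩ : H.edgeSet) = ⟨s(x, y), h.symm⟩ :=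
    Subtype.ext Sym2.eq_swap
  simp only [subdivGraph, fromRel_adj]
  grind [H.adj_comm, SimpleGraph.Adj.ne]

theorem subdivGraph_adj_inl_inr (hσ : ValidOrientation H σ) {x : W}
    {p : Σ e : H.edgeSet, Fin (n e)} (hp : n p.1 ≤ 1) :
    (subdivGraph H σ n).Adj (Sum.inl x) (Sum.inr p) ↔ x ∈ (p.1 : Sym2 W) := by
  have hp_zero : (p.2 : ℕ) = 0 := by lia
  have hn_zero : n p.1 - 1 = 0 := by lia
  rw [← hσ p.1, Sym2.mem_iff]
  simp only [subdivGraph, fromRel_adj]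
  grind

theorem not_subdivGraph_adj_inr_inr {p q : Σ e : H.edgeSet, Fin (n e)} (hp : n p.1 ≤ 1) :
    ¬ (subdivGraph H σ n).Adj (Sum.inr p) (Sum.inr q) := by
  simp only [subdivGraph, fromRel_adj]
  grind

theorem subdivGraph_isIndContained {H' : SimpleGraph V} {σ' : H'.edgeSet → V × V}
    {n' : H'.edgeSet → ℕ} (hσ' : ValidOrientation H' σ') (hσ : ValidOrientation H σ)
    (f : H' ↪g H) (hn : ∀ e, n (f.mapEdgeSet e) = n' e) (hn' : ∀ e, n' e ≤ 1) :
    subdivGraph H' σ' n' ⊴ subdivGraph H σ n := by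
  let i : (Σ e, Fin (n' e)) → Σ e, Fin (n e) := Sigma.map f.mapEdgeSet fun e ↦ Fin.cast (hn e).symm
  have hi : Function.Injective i :=
    f.mapEdgeSet.injective.sigma_map fun e ↦ Fin.cast_injective (hn e).symm
  have hni (p) : n (i p).1 ≤ 1 := (hn p.1).trans_le (hn' p.1)
  have hadj_inl_inl (x y) : (subdivGraph H σ n).Adj (.inl (f x)) (.inl (f y)) ↔
      (subdivGraph H' σ' n').Adj (.inl x) (.inl y) := by
    simp only [subdivGraph_adj_inl_inl, ← hn]
    exact exists_prop_congr (fun _ ↦ Iff.rfl) f.map_adj_iff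
  have hadj_inl_inr (x p) : (subdivGraph H σ n).Adj (.inl (f x)) (.inr (i p)) ↔
      (subdivGraph H' σ' n').Adj (.inl x) (.inr p) := by
    rw [subdivGraph_adj_inl_inr hσ (hni p), subdivGraph_adj_inl_inr hσ' (hn' p.1)]
    exact Sym2.mem_map.trans (by simp [f.injective.eq_iff])
  refine ⟨⟨⟨Sum.map f i, f.injective.sumMap hi⟩, ?_⟩⟩
  rintro (x | p) (y | q)
  · exact hadj_inl_inl x y
  · exact hadj_inl_inr x q
  · exact (adj_comm ..).trans ((hadj_inl_inr y p).trans (adj_comm ..))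
  · exact iff_of_false (not_subdivGraph_adj_inr_inr (hni p))
      (not_subdivGraph_adj_inr_inr (hn' p.1))

theorem subdivGraph_induce_isIndContained (hσ : ValidOrientation H σ) (hn : ∀ e, n e ≤ 1)
    {A : Set W} (hA : ((subdivGraph H σ n).comap Sum.inl).IsIndepSet A)
    {σ' : (H.induce A).edgeSet → A × A} (hσ' : ValidOrientation (H.induce A) σ') :
    subdivGraph (H.induce A) σ' (fun _ ↦ 1) ⊴ subdivGraph H σ n := by
  refine subdivGraph_isIndContained hσ' hσ (.induce A) ?_ fun _ ↦ le_rfl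
  rintro ⟨⟨x, y⟩, hxy : H.Adj x y⟩
  have h_ne_zero : n ⟨s(x.1, y.1), hxy⟩ ≠ 0 := fun h ↦
    hA x.2 y.2 hxy.ne (subdivGraph_adj_inl_inl.2 ⟨hxy, h⟩)
  exact le_antisymm (hn _) (Nat.one_le_iff_ne_zero.2 h_ne_zero)

end SubdivGraph

theorem stmt18_general {H : SimpleGraph W} {G : SimpleGraph V} {a b : ℕ}
    (hχ : ((a * b : ℕ) : ℕ∞) < H.chromaticNumber)
    (hsub : ∃ (σ : H.edgeSet → W × W) (n : H.edgeSet → ℕ), ValidOrientation H σ ∧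
      (∀ e, n e ≤ 1) ∧ Nonempty (G ≃g subdivGraph H σ n)) :
    ∃ s : Set V,
      ((a : ℕ∞) < (G.induce s).chromaticNumber) ∨
      (∃ (β : Type v) (H' : SimpleGraph β) (σ' : H'.edgeSet → β × β),
        ValidOrientation H' σ' ∧
        Nonempty ((G.induce s) ≃g subdivGraph H' σ' (fun _ => 1)) ∧
        (b : ℕ∞) < H'.chromaticNumber) := by
  obtain ⟨σ, n, hσ, hn, ⟨f⟩⟩ := hsub
  simp only [← not_le, chromaticNumber_le_iff_colorable] at hχ ⊢
  by_cases hG : G.Colorable a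
  · have hbranch : ((subdivGraph H σ n).comap Sum.inl).Colorable a :=
      ((colorable_congr f).1 hG).of_hom (Hom.comap Sum.inl _)
    obtain ⟨A, hA, hAb⟩ := exists_isIndepSet_not_colorable_induce hχ hbranch
    obtain ⟨σ', hσ'⟩ := exists_validOrientation (H.induce A)
    have hcontained : subdivGraph (H.induce A) σ' (fun _ ↦ 1) ⊴ G :=
      (subdivGraph_induce_isIndContained hσ hn hA hσ').trans ⟨f.symm.toEmbedding⟩
    obtain ⟨s, ⟨g⟩⟩ := isIndContained_iff_exists_iso_induce.1 hcontained
    exact ⟨s, .inr ⟨A, H.induce A, σ', hσ', ⟨g.symm⟩, hAb⟩⟩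
  · exact ⟨Set.univ, .inl (hG ∘ (colorable_congr (induceUnivIso G)).1)⟩

theorem natCast_toNat_sub_one_mul_self_lt {k : ℤ} {c : ℕ∞}
    (h : (((k - 1) ^ 2 + 1).toNat : ℕ∞) ≤ c) :
    (((k - 1).toNat * (k - 1).toNat : ℕ) : ℕ∞) < c := by
  have hk : ((k - 1).toNat : ℤ) ≤ |k - 1| := by
    rw [Int.toNat_eq_max]
    exact max_le (le_abs_self _) (abs_nonneg _)
  have hsq : ((k - 1).toNat : ℤ) ^ 2 ≤ (k - 1) ^ 2 := by
    simpa only [sq_abs] using pow_le_pow_left₀ (Nat.cast_nonneg _) hk 2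
  have hnat : (k - 1).toNat * (k - 1).toNat < ((k - 1) ^ 2 + 1).toNat := by
    rw [Int.lt_toNat, Nat.cast_mul, ← sq]
    exact Int.lt_add_one_of_le hsq
  exact (Nat.cast_lt.2 hnat).trans_le h

theorem natCast_toNat_le_of_toNat_sub_one_lt {k : ℤ} {c : ℕ∞}
    (h : ((k - 1).toNat : ℕ∞) < c) : (k.toNat : ℕ∞) ≤ c :=
  (Nat.cast_le.2 (by lia)).trans (ENat.natCast_add_one_le_iff.2 h)

theorem stmt18 (k : ℤ) (α : Type) [Fintype α] (H : SimpleGraph α)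
    (hχ : ((((k - 1) ^ 2 + 1).toNat : ℕ∞) ≤ H.chromaticNumber))
    (V : Type) [Fintype V] (G : SimpleGraph V)
    (hsub : ∃ (σ : H.edgeSet → α × α) (n : H.edgeSet → ℕ), ValidOrientation H σ ∧
      (∀ e, n e ≤ 1) ∧ Nonempty (G ≃g subdivGraph H σ n)) :
    ∃ s : Set V,
      ((k.toNat : ℕ∞) ≤ (G.induce s).chromaticNumber) ∨
      (∃ (β : Type) (H' : SimpleGraph β) (σ' : H'.edgeSet → β × β),
        ValidOrientation H' σ' ∧
        Nonempty ((G.induce s) ≃g subdivGraph H' σ' (fun _ => 1)) ∧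
        (k.toNat : ℕ∞) ≤ H'.chromaticNumber) := by
  obtain ⟨s, hs | ⟨β, H', σ', hσ', hiso, hH'⟩⟩ :=
    stmt18_general (natCast_toNat_sub_one_mul_self_lt hχ) hsub
  · exact ⟨s, .inl (natCast_toNat_le_of_toNat_sub_one_lt hs)⟩
  · exact ⟨s, .inr ⟨β, H', σ', hσ', hiso, natCast_toNat_le_of_toNat_sub_one_lt hH'⟩⟩

end CFPaper
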